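/- Theorem 1 (Asymptotic Convergence). Almost surely, for every sufficiently large n each row Z^m_n is nonzero, and the graph fusion encoder embedding of the distinguished vertex converges to the corresponding row of the row-normalized concatenated block matrix: ‖ [Z^1_n/‖Z^1_n‖₂ | … | Z^M_n/‖Z^M_n‖₂] − B̃(y,:) ‖₂ → 0 as n → ∞, where B̃(y,:) = [B_1(y,:)/‖B_1(y,:)‖₂ | … | B_M(y,:)/‖B_M(y,:)‖₂] ∈ ℝ^{MK}. -/

import Mathlib

open MeasureTheory ProbabilityTheory Filter
open scoped ProbabilityTheory

/-- The joint family of labels, degree parameters and per-graph uniforms, indexed by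
`ℕ ⊕ (ℕ ⊕ Fin M × ℕ)`. Asserting that this family is (jointly) independent expresses that each
of the `M + 2` families is an independent family and that all families are mutually
independent. -/
def multigraphFamily {Ω : Type*} {K M : ℕ}
    (Y : ℕ → Ω → Fin K) (θ : ℕ → Ω → ℝ) (U : Fin M → ℕ → Ω → ℝ) :
    ∀ i : ℕ ⊕ (ℕ ⊕ Fin M × ℕ),
      Ω → Sum.elim (fun _ : ℕ => Fin K) (fun _ : ℕ ⊕ Fin M × ℕ => ℝ) i
  | Sum.inl j => Y j
  | Sum.inr (Sum.inl j) => θ j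
  | Sum.inr (Sum.inr (m, j)) => U m j

/-- The corresponding family of measurable-space structures on the codomains. -/
def multigraphMS (K M : ℕ) :
    ∀ i : ℕ ⊕ (ℕ ⊕ Fin M × ℕ),
      MeasurableSpace (Sum.elim (fun _ : ℕ => Fin K) (fun _ : ℕ ⊕ Fin M × ℕ => ℝ) i)
  | Sum.inl _ => inferInstanceAs (MeasurableSpace (Fin K))
  | Sum.inr _ => inferInstanceAs (MeasurableSpace ℝ)

/-!
For a fixed graph, the triples `(Y j, θ j, U m j)` are independent and share one product law. The
coordinate `Z m n k` is a quotient of two averages over `j < n`, so Etemadi's strong law sends it to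
the conditional mean of the edge indicator on the class `k`. Since `P(U ≤ s) = s` for a uniform `U`
and `s ∈ [0, 1]`, this mean is `θ₀ * E[θ] * B m y k`. The limiting row is thus a positive multiple
of `B m y`, and `z ↦ z / ‖z‖₂` is continuous away from `0` and blind to positive factors.
-/

open scoped Topology

section StrongLaw

variable {Ω α E : Type*} [MeasurableSpace Ω] [MeasurableSpace α] [NormedAddCommGroup E]
  [NormedSpace ℝ E] [CompleteSpace E] [MeasurableSpace E] [BorelSpace E]
  {P : Measure Ω} {ρ : Measure α} {X : ℕ → Ω → α} {f : α → E}

lemma ae_tendsto_average_comp_of_pairwise_indepFun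
    (hindep : Pairwise fun i j => IndepFun (X i) (X j) P) (hlaw : ∀ j, HasLaw (X j) ρ P)
    (hf : Measurable f) (hfi : Integrable f ρ) :
    ∀ᵐ ω ∂P, Tendsto (fun n : ℕ => (n : ℝ)⁻¹ • ∑ j ∈ Finset.range n, f (X j ω))
      atTop (𝓝 (∫ x, f x ∂ρ)) := by
  have hint : Integrable (f ∘ X 0) P :=
    ((hlaw 0).map_eq ▸ hfi : Integrable f (P.map (X 0))).comp_aemeasurable (hlaw 0).aemeasurable
  have hident (j : ℕ) : IdentDistrib (X j) (X 0) P P :=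
    ⟨(hlaw j).aemeasurable, (hlaw 0).aemeasurable, (hlaw j).map_eq.trans (hlaw 0).map_eq.symm⟩
  have hlim := strong_law_ae (fun j => f ∘ X j) hint
    (fun i j hij => (hindep hij).comp hf hf) fun j => (hident j).comp hf
  rwa [(hlaw 0).integral_comp hfi.aestronglyMeasurable] at hlim

lemma ae_tendsto_average_filter_of_pairwise_indepFun {p : α → Prop} [DecidablePred p]
    (hindep : Pairwise fun i j => IndepFun (X i) (X j) P) (hlaw : ∀ j, HasLaw (X j) ρ P)
    (hp : MeasurableSet {x | p x}) (hp_zero : ρ {x | p x} ≠ 0) (hp_top : ρ {x | p x} ≠ ⊤)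
    (hf : Measurable f) (hfi : IntegrableOn f {x | p x} ρ) :
    ∀ᵐ ω ∂P, Tendsto
      (fun n : ℕ => (((Finset.range n).filter fun j => p (X j ω)).card : ℝ)⁻¹ •
        ∑ j ∈ (Finset.range n).filter fun j => p (X j ω), f (X j ω))
      atTop (𝓝 (⨍ x in {x | p x}, f x ∂ρ)) := by
  have hsum := ae_tendsto_average_comp_of_pairwise_indepFun hindep hlaw
    (hf.indicator hp) ((integrable_indicator_iff hp).2 hfi)
  have hcard := ae_tendsto_average_comp_of_pairwise_indepFun (f := {x | p x}.indicator (1 : α → ℝ))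
    hindep hlaw (measurable_one.indicator hp)
    ((integrable_indicator_iff hp).2 (integrableOn_const hp_top))
  have hp_real : ρ.real {x | p x} ≠ 0 := ENNReal.toReal_ne_zero.2 ⟨hp_zero, hp_top⟩
  rw [integral_indicator hp] at hsum
  rw [integral_indicator_one hp] at hcard
  filter_upwards [hsum, hcard] with ω hsum hcard
  rw [setAverage_eq]
  refine ((hcard.inv₀ hp_real).smul hsum).congr' ?_
  filter_upwards [eventually_ne_atTop 0] with n hn
  have hn' : (n : ℝ) ≠ 0 := Nat.cast_ne_zero.2 hn
  simp only [Set.indicator_apply, Set.mem_ofPred_eq, Pi.one_apply, Finset.sum_boole,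
    ← Finset.sum_filter, smul_smul, smul_eq_mul, mul_inv, inv_inv]
  rw [mul_right_comm, mul_inv_cancel₀ hn', one_mul]

end StrongLaw

section ProductLaw

lemma volume_restrict_unitInterval_Iic {s : ℝ} (hs : s ∈ Set.Icc (0 : ℝ) 1) :
    (volume.restrict (Set.Icc (0 : ℝ) 1)) (Set.Iic s) = ENNReal.ofReal s := by
  have hinter : Set.Iic s ∩ Set.Icc 0 1 = Set.Icc 0 s := by
    ext x
    simp only [Set.mem_inter_iff, Set.mem_Iic, Set.mem_Icc]
    exact ⟨fun h => ⟨h.2.1, h.1⟩, fun h => ⟨h.2, h.1, h.2.trans hs.2⟩⟩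
  rw [Measure.restrict_apply measurableSet_Iic, hinter, Real.volume_Icc, sub_zero]

instance isProbabilityMeasure_volume_restrict_unitInterval :
    IsProbabilityMeasure (volume.restrict (Set.Icc (0 : ℝ) 1)) :=
  ⟨by simp⟩

lemma measureReal_prod_uniform_le {γ : Type*} [MeasurableSpace γ] {τ : Measure γ} {g : γ → ℝ}
    (hg : Measurable g) (hg_mem : ∀ᵐ t ∂τ, g t ∈ Set.Icc (0 : ℝ) 1) :
    (τ.prod (volume.restrict (Set.Icc (0 : ℝ) 1))).real {x | x.2 ≤ g x.1} = ∫ t, g t ∂τ := by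
  have hmeas : MeasurableSet {x : γ × ℝ | x.2 ≤ g x.1} :=
    measurableSet_le measurable_snd (hg.comp measurable_fst)
  rw [measureReal_def, Measure.prod_apply hmeas,
    integral_eq_lintegral_of_nonneg_ae (hg_mem.mono fun _ ht => ht.1) hg.aestronglyMeasurable]
  congr 1
  exact lintegral_congr_ae (hg_mem.mono fun _ ht => volume_restrict_unitInterval_Iic ht)

lemma setOf_fst_eq_eq_singleton_prod_univ {κ γ : Type*} (k : κ) :
    {x : κ × γ | x.1 = k} = {k} ×ˢ Set.univ := by
  ext
  simp

lemma setAverage_prod_fst_eq {κ γ E : Type*} [MeasurableSpace κ] [MeasurableSingletonClass κ]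
    [MeasurableSpace γ] [NormedAddCommGroup E] [NormedSpace ℝ E] {ν : Measure κ} [SFinite ν]
    {σ : Measure γ} [IsProbabilityMeasure σ] {k : κ} (hk_zero : ν {k} ≠ 0) (hk_top : ν {k} ≠ ⊤)
    (f : κ × γ → E) :
    ⨍ x in {x : κ × γ | x.1 = k}, f x ∂ν.prod σ = ∫ z, f (k, z) ∂σ := by
  have hrestrict : (ν.prod σ).restrict ({k} ×ˢ Set.univ) = ν {k} • σ.map (Prod.mk k) := by
    rw [← Measure.restrict_prod_eq_prod_univ, Measure.restrict_singleton, Measure.prod_smul_left,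
      Measure.dirac_prod]
  rw [setOf_fst_eq_eq_singleton_prod_univ, setAverage_eq, hrestrict, integral_smul_measure,
    (measurableEmbedding_prodMk_left k).integral_map, measureReal_prod_prod, probReal_univ, mul_one]
  exact inv_smul_smul₀ (ENNReal.toReal_ne_zero.2 ⟨hk_zero, hk_top⟩) _

end ProductLaw

section EncoderEmbedding

variable {Ω κ : Type*}

/-- The indicator of an edge from the distinguished vertex, of degree `θ₀` and block row `b`, to a
vertex with data `(label, degree, uniform variable)`. -/
noncomputable def edgeIndicator (θ₀ : ℝ) (b : κ → ℝ) (x : κ × ℝ × ℝ) : ℝ :=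
  if x.2.2 ≤ θ₀ * x.2.1 * b x.1 then 1 else 0

lemma norm_edgeIndicator_le_one (θ₀ : ℝ) (b : κ → ℝ) (x : κ × ℝ × ℝ) :
    ‖edgeIndicator θ₀ b x‖ ≤ 1 := by
  unfold edgeIndicator
  split_ifs <;> simp

variable [MeasurableSpace Ω] [MeasurableSpace κ] [MeasurableSingletonClass κ] {P : Measure Ω}
  {ν : Measure κ} {τ : Measure ℝ} {θ₀ : ℝ} {b : κ → ℝ}

lemma measurable_edgeIndicator [Countable κ] (θ₀ : ℝ) (b : κ → ℝ) :
    Measurable (edgeIndicator θ₀ b) := by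
  have hb : Measurable b := .of_discrete
  exact .ite (measurableSet_le (by fun_prop) (by fun_prop)) measurable_const measurable_const

variable [IsProbabilityMeasure ν] [IsProbabilityMeasure τ]

lemma setAverage_edgeIndicator {k : κ} (hk : ν {k} ≠ 0)
    (hprob : ∀ᵐ t ∂τ, θ₀ * t * b k ∈ Set.Icc (0 : ℝ) 1) :
    ⨍ x in {x : κ × ℝ × ℝ | x.1 = k},
        edgeIndicator θ₀ b x ∂ν.prod (τ.prod (volume.restrict (Set.Icc 0 1))) =
      θ₀ * (∫ t, t ∂τ) * b k := by
  have hmeas : Measurable fun t : ℝ => θ₀ * t * b k := by fun_prop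
  calc ⨍ x in {x : κ × ℝ × ℝ | x.1 = k},
        edgeIndicator θ₀ b x ∂ν.prod (τ.prod (volume.restrict (Set.Icc 0 1)))
      = ∫ z : ℝ × ℝ, {z | z.2 ≤ θ₀ * z.1 * b k}.indicator 1 z
          ∂τ.prod (volume.restrict (Set.Icc 0 1)) :=
        setAverage_prod_fst_eq hk (measure_ne_top ν _) _
    _ = ∫ t, θ₀ * t * b k ∂τ := by
        rw [integral_indicator_one (measurableSet_le (by fun_prop) (by fun_prop)),
          measureReal_prod_uniform_le hmeas hprob]
    _ = θ₀ * (∫ t, t ∂τ) * b k := by rw [integral_mul_const, integral_const_mul]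

lemma ae_tendsto_encoderEmbedding [Countable κ] [DecidableEq κ] {X : ℕ → Ω → κ × ℝ × ℝ}
    (hindep : Pairwise fun i j => IndepFun (X i) (X j) P)
    (hlaw : ∀ j, HasLaw (X j) (ν.prod (τ.prod (volume.restrict (Set.Icc 0 1)))) P)
    (hν : ∀ k, ν {k} ≠ 0) (hprob : ∀ k, ∀ᵐ t ∂τ, θ₀ * t * b k ∈ Set.Icc (0 : ℝ) 1) :
    ∀ᵐ ω ∂P, Tendsto
      (fun n k => (∑ j ∈ (Finset.range n).filter fun j => (X j ω).1 = k,
          edgeIndicator θ₀ b (X j ω)) /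
        (((Finset.range n).filter fun j => (X j ω).1 = k).card : ℝ))
      atTop (𝓝 ((θ₀ * ∫ t, t ∂τ) • b)) := by
  have hclass_meas (k : κ) : MeasurableSet {x : κ × ℝ × ℝ | x.1 = k} :=
    measurable_fst (measurableSet_singleton k)
  have hclass_ne (k : κ) :
      (ν.prod (τ.prod (volume.restrict (Set.Icc (0 : ℝ) 1)))) {x | x.1 = k} ≠ 0 := by
    rw [setOf_fst_eq_eq_singleton_prod_univ, Measure.prod_prod, measure_univ, mul_one]
    exact hν k
  have hint : Integrable (edgeIndicator θ₀ b)
      (ν.prod (τ.prod (volume.restrict (Set.Icc (0 : ℝ) 1)))) :=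
    .of_bound (measurable_edgeIndicator θ₀ b).aestronglyMeasurable 1
      (.of_forall (norm_edgeIndicator_le_one θ₀ b))
  have hclass (k : κ) := ae_tendsto_average_filter_of_pairwise_indepFun hindep hlaw
    (hclass_meas k) (hclass_ne k) (measure_ne_top _ _) (measurable_edgeIndicator θ₀ b)
    hint.integrableOn
  filter_upwards [ae_all_iff.2 hclass] with ω hω
  refine tendsto_pi_nhds.2 fun k => ?_
  simpa only [setAverage_edgeIndicator (hν k) (hprob k), Pi.smul_apply, smul_eq_mul,
    inv_mul_eq_div] using hω k

end EncoderEmbedding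

section Normalization

lemma tendsto_normalize {α V : Type*} [NormedAddCommGroup V] [NormedSpace ℝ V] {l : Filter α}
    {z : α → V} {v : V} (hz : Tendsto z l (𝓝 v)) (hv : v ≠ 0) :
    Tendsto (fun a => NormedSpace.normalize (z a)) l (𝓝 (NormedSpace.normalize v)) :=
  (hz.norm.inv₀ (norm_ne_zero_iff.2 hv)).smul hz

variable {ι κ : Type*} [Fintype κ]

/-- The fusion embedding `[z₁/‖z₁‖₂ | … | z_M/‖z_M‖₂]` of a family of rows, as a vector of blocks
carrying the Euclidean norm of the concatenation. A zero row gives a zero block. -/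
noncomputable def fusionEmbedding (z : ι → κ → ℝ) : PiLp 2 fun _ : ι => EuclideanSpace ℝ κ :=
  WithLp.toLp 2 fun m => NormedSpace.normalize (WithLp.toLp 2 (z m))

lemma tendsto_fusionEmbedding {α : Type*} {l : Filter α} {z : α → ι → κ → ℝ} {b : ι → κ → ℝ}
    {c : ℝ} (hc : 0 < c) (hb : ∀ m, b m ≠ 0) (hz : ∀ m, Tendsto (fun a => z a m) l (𝓝 (c • b m))) :
    Tendsto (fun a => fusionEmbedding (z a)) l (𝓝 (fusionEmbedding b)) := by
  refine ((PiLp.continuous_toLp 2 _).tendsto _).comp (tendsto_pi_nhds.2 fun m => ?_)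
  have hrow : Tendsto (fun a => WithLp.toLp 2 (z a m)) l (𝓝 (c • WithLp.toLp 2 (b m))) :=
    ((PiLp.continuous_toLp 2 _).tendsto _).comp (hz m)
  have hrow_ne : c • WithLp.toLp 2 (b m) ≠ 0 :=
    smul_ne_zero hc.ne' ((WithLp.toLp_eq_zero 2).not.2 (hb m))
  rw [← NormedSpace.normalize_smul_of_pos hc]
  exact tendsto_normalize hrow hrow_ne

lemma norm_fusionEmbedding_sub [Fintype ι] (z w : ι → κ → ℝ) :
    ‖fusionEmbedding z - fusionEmbedding w‖ =
      Real.sqrt (∑ m, ∑ k, (z m k / Real.sqrt (∑ k', z m k' ^ 2) -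
        w m k / Real.sqrt (∑ k', w m k' ^ 2)) ^ 2) := by
  simp only [fusionEmbedding, NormedSpace.normalize, PiLp.norm_eq_of_L2, PiLp.sub_apply,
    PiLp.smul_apply, smul_eq_mul, Real.norm_eq_abs, sq_abs, inv_mul_eq_div]
  exact congrArg Real.sqrt (Finset.sum_congr rfl fun m _ =>
    Real.sq_sqrt (Finset.sum_nonneg fun k _ => sq_nonneg _))

end Normalization

section Independence

lemma indepFun_prodMk_triple_of_iIndepFun {Ω ι : Type*} {β : ι → Type*} [MeasurableSpace Ω]
    {mβ : ∀ i, MeasurableSpace (β i)} {P : Measure Ω} {X : ∀ i, Ω → β i} (hX : iIndepFun X P)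
    (hmeas : ∀ i, Measurable (X i)) [DecidableEq ι] {a b c a' b' c' : ι}
    (hdisj : Disjoint ({a, b, c} : Finset ι) {a', b', c'}) :
    IndepFun (fun ω => (X a ω, X b ω, X c ω)) (fun ω => (X a' ω, X b' ω, X c' ω)) P := by
  have heval (a b c : ι) : Measurable fun v : ∀ i : ({a, b, c} : Finset ι), β i =>
      (v ⟨a, by simp⟩, v ⟨b, by simp⟩, v ⟨c, by simp⟩) := by fun_prop
  exact (hX.indepFun_finset _ _ hdisj hmeas).comp (heval a b c) (heval a' b' c')

lemma hasLaw_prodMk_triple_of_iIndepFun {Ω ι : Type*} {β : ι → Type*} [MeasurableSpace Ω]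
    {mβ : ∀ i, MeasurableSpace (β i)} {P : Measure Ω} [IsFiniteMeasure P] {X : ∀ i, Ω → β i}
    (hX : iIndepFun X P) (hmeas : ∀ i, Measurable (X i)) {a b c : ι}
    (hab : a ≠ b) (hac : a ≠ c) (hbc : b ≠ c) :
    HasLaw (fun ω => (X a ω, X b ω, X c ω))
      ((P.map (X a)).prod ((P.map (X b)).prod (P.map (X c)))) P := by
  have hlaw (i : ι) : HasLaw (X i) (P.map (X i)) P := ⟨(hmeas i).aemeasurable, rfl⟩
  exact (hX.indepFun_prodMk hmeas b c a hab.symm hac.symm).symm.hasLaw_prod (hlaw a)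
    ((hX.indepFun hbc).hasLaw_prod (hlaw b) (hlaw c))

variable {Ω : Type*} [MeasurableSpace Ω] {K M : ℕ} {Y : ℕ → Ω → Fin K} {θ : ℕ → Ω → ℝ}
  {U : Fin M → ℕ → Ω → ℝ} {P : Measure Ω}

lemma measurable_multigraphFamily (hY : ∀ j, Measurable (Y j)) (hθ : ∀ j, Measurable (θ j))
    (hU : ∀ m j, Measurable (U m j)) (i : ℕ ⊕ (ℕ ⊕ Fin M × ℕ)) :
    Measurable[_, multigraphMS K M i] (multigraphFamily Y θ U i) := by
  rcases i with j | j | ⟨m, j⟩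
  exacts [hY j, hθ j, hU m j]

lemma pairwise_indepFun_of_iIndepFun_multigraphFamily
    (hindep : iIndepFun (m := multigraphMS K M) (multigraphFamily Y θ U) P)
    (hY : ∀ j, Measurable (Y j)) (hθ : ∀ j, Measurable (θ j)) (hU : ∀ m j, Measurable (U m j))
    (m : Fin M) :
    Pairwise fun i j =>
      IndepFun (fun ω => (Y i ω, θ i ω, U m i ω)) (fun ω => (Y j ω, θ j ω, U m j ω)) P := by
  intro i j hij
  have hdisj : Disjoint
      ({.inl i, .inr (.inl i), .inr (.inr (m, i))} : Finset (ℕ ⊕ (ℕ ⊕ Fin M × ℕ)))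
      {.inl j, .inr (.inl j), .inr (.inr (m, j))} := by
    simp [hij.symm]
  exact indepFun_prodMk_triple_of_iIndepFun hindep (measurable_multigraphFamily hY hθ hU) hdisj

lemma hasLaw_of_iIndepFun_multigraphFamily [IsFiniteMeasure P]
    (hindep : iIndepFun (m := multigraphMS K M) (multigraphFamily Y θ U) P)
    (hY : ∀ j, Measurable (Y j)) (hθ : ∀ j, Measurable (θ j)) (hU : ∀ m j, Measurable (U m j))
    (m : Fin M) (j : ℕ) :
    HasLaw (fun ω => (Y j ω, θ j ω, U m j ω))
      ((P.map (Y j)).prod ((P.map (θ j)).prod (P.map (U m j)))) P :=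
  hasLaw_prodMk_triple_of_iIndepFun hindep (measurable_multigraphFamily hY hθ hU)
    (a := .inl j) (b := .inr (.inl j)) (c := .inr (.inr (m, j))) (by simp) (by simp) (by simp)

end Independence

lemma map_eq_map_of_measure_fiber_eq {Ω κ : Type*} [MeasurableSpace Ω] [MeasurableSpace κ]
    [MeasurableSingletonClass κ] [Countable κ] {P : Measure Ω} {X X' : Ω → κ} (hX : Measurable X)
    (hX' : Measurable X') (h : ∀ k, P {ω | X ω = k} = P {ω | X' ω = k}) :
    P.map X = P.map X' :=
  Measure.ext_of_singleton fun k => by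
    rw [Measure.map_apply hX (measurableSet_singleton k),
      Measure.map_apply hX' (measurableSet_singleton k)]
    exact h k

lemma integral_id_pos_of_ae_mem_Icc {τ : Measure ℝ} [IsProbabilityMeasure τ] {δ Δ : ℝ}
    (hδ : 0 < δ) (hτ : ∀ᵐ t ∂τ, t ∈ Set.Icc δ Δ) : 0 < ∫ t, t ∂τ := by
  have hint : Integrable (fun t : ℝ => t) τ := .of_mem_Icc δ Δ aemeasurable_id hτ
  calc 0 < ∫ _, δ ∂τ := by simpa using hδ
    _ ≤ ∫ t, t ∂τ := integral_mono_ae (integrable_const δ) hint (hτ.mono fun _ ht => ht.1)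

theorem fusion_encoder_embedding_tendsto_general {Ω ι κ : Type*} [MeasurableSpace Ω] [Fintype ι]
    [Fintype κ] [DecidableEq κ] [MeasurableSpace κ] [MeasurableSingletonClass κ] {P : Measure Ω}
    {ν : Measure κ} [IsProbabilityMeasure ν] {τ : Measure ℝ} [IsProbabilityMeasure τ]
    {Y : ℕ → Ω → κ} {θ : ℕ → Ω → ℝ} {U : ι → ℕ → Ω → ℝ} {θ₀ : ℝ} {b : ι → κ → ℝ}
    (hindep : ∀ m, Pairwise fun i j =>
      IndepFun (fun ω => (Y i ω, θ i ω, U m i ω)) (fun ω => (Y j ω, θ j ω, U m j ω)) P)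
    (hlaw : ∀ m j, HasLaw (fun ω => (Y j ω, θ j ω, U m j ω))
      (ν.prod (τ.prod (volume.restrict (Set.Icc 0 1)))) P)
    (hν : ∀ k, ν {k} ≠ 0) (hτ : 0 < ∫ t, t ∂τ) (hθ₀ : 0 < θ₀) (hb : ∀ m, b m ≠ 0)
    (hprob : ∀ m k, ∀ᵐ t ∂τ, θ₀ * t * b m k ∈ Set.Icc (0 : ℝ) 1)
    {A : ι → ℕ → Ω → ℝ}
    (hA : ∀ m j ω, A m j ω = if U m j ω ≤ θ₀ * θ j ω * b m (Y j ω) then 1 else 0)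
    {Z : ι → ℕ → Ω → κ → ℝ}
    (hZ : ∀ m n ω k, Z m n ω k =
      (∑ j ∈ (Finset.range n).filter fun j => Y j ω = k, A m j ω) /
        (((Finset.range n).filter fun j => Y j ω = k).card : ℝ)) :
    ∀ᵐ ω ∂P,
      (∀ᶠ n in atTop, ∀ m, Z m n ω ≠ 0) ∧
      Tendsto (fun n =>
          Real.sqrt (∑ m, ∑ k,
            (Z m n ω k / Real.sqrt (∑ k', Z m n ω k' ^ 2) -
              b m k / Real.sqrt (∑ k', b m k' ^ 2)) ^ 2))
        atTop (𝓝 0) := by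
  have hc : 0 < θ₀ * ∫ t, t ∂τ := mul_pos hθ₀ hτ
  have hZ_lim (m : ι) :
      ∀ᵐ ω ∂P, Tendsto (fun n => Z m n ω) atTop (𝓝 ((θ₀ * ∫ t, t ∂τ) • b m)) := by
    filter_upwards [ae_tendsto_encoderEmbedding (hindep m) (hlaw m) hν (hprob m)] with ω hω
    convert hω using 2 with n
    ext k
    simp only [hZ, hA, edgeIndicator]
  filter_upwards [ae_all_iff.2 hZ_lim] with ω hω
  refine ⟨eventually_all.2 fun m => (hω m).eventually_ne (smul_ne_zero hc.ne' (hb m)), ?_⟩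
  simp only [← norm_fusionEmbedding_sub]
  exact tendsto_iff_norm_sub_tendsto_zero.1 (tendsto_fusionEmbedding hc hb hω)

/-- Theorem 1, Asymptotic Convergence: In the `M`-graph degree-corrected
stochastic block model setup, with encoder embedding rows
`Z m n ω k = (1/n_k(n)) ∑_{j < n, Y j = k} A m j ω`, almost surely each row `Z m n ω` is
nonzero for all sufficiently large `n`, and the fused normalized embedding converges to the
corresponding row of the row-normalized concatenated block matrix:
`‖[Z¹/‖Z¹‖₂ | … | Z^M/‖Z^M‖₂] − B̃(y,:)‖₂ → 0`. -/
theorem fusion_encoder_embedding_tendsto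
    {Ω : Type*} [MeasureSpace Ω] [IsProbabilityMeasure (ℙ : Measure Ω)]
    (K M : ℕ) (hK : 1 ≤ K) (hM : 1 ≤ M)
    (π : Fin K → ℝ) (hπ : ∀ k, π k ∈ Set.Ioo (0:ℝ) 1) (hπsum : ∑ k, π k = 1)
    (B : Fin M → Fin K → Fin K → ℝ) (hB : ∀ m k l, B m k l ∈ Set.Icc (0:ℝ) 1)
    (y : Fin K) (hBrow : ∀ m, (fun l => B m y l) ≠ 0)
    (θ₀ : ℝ) (hθ₀ : θ₀ ∈ Set.Ioc (0:ℝ) 1)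
    (δ Δ : ℝ) (hδ : 0 < δ) (hδΔ : δ ≤ Δ) (hΔ : Δ ≤ 1)
    (Y : ℕ → Ω → Fin K) (θ : ℕ → Ω → ℝ) (U : Fin M → ℕ → Ω → ℝ)
    (hYmeas : ∀ j, Measurable (Y j)) (hθmeas : ∀ j, Measurable (θ j))
    (hUmeas : ∀ m j, Measurable (U m j))
    (hYdist : ∀ j k, ℙ {ω | Y j ω = k} = ENNReal.ofReal (π k))
    (hθrange : ∀ j ω, θ j ω ∈ Set.Icc δ Δ)
    (hθdist : ∀ j, Measure.map (θ j) ℙ = Measure.map (θ 0) ℙ)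
    (hUdist : ∀ m j, Measure.map (U m j) ℙ = volume.restrict (Set.Icc (0:ℝ) 1))
    (hIndep : iIndepFun (m := multigraphMS K M) (multigraphFamily Y θ U) ℙ)
    (A : Fin M → ℕ → Ω → ℝ)
    (hA : ∀ m j ω, A m j ω = if U m j ω ≤ θ₀ * θ j ω * B m y (Y j ω) then 1 else 0)
    (Z : Fin M → ℕ → Ω → Fin K → ℝ)
    (hZ : ∀ m n ω k, Z m n ω k =
      (∑ j ∈ (Finset.range n).filter fun j => Y j ω = k, A m j ω) /
        ((((Finset.range n).filter fun j => Y j ω = k)).card : ℝ)) :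
    ∀ᵐ ω ∂ℙ,
      (∀ᶠ n in atTop, ∀ m, Z m n ω ≠ 0) ∧
      Tendsto (fun n =>
          Real.sqrt (∑ m : Fin M, ∑ k : Fin K,
            (Z m n ω k / Real.sqrt (∑ k' : Fin K, Z m n ω k' ^ 2) -
              B m y k / Real.sqrt (∑ k' : Fin K, B m y k' ^ 2)) ^ 2))
        atTop (nhds 0) := by
  have hYlaw (j : ℕ) : Measure.map (Y j) ℙ = Measure.map (Y 0) ℙ :=
    map_eq_map_of_measure_fiber_eq (hYmeas j) (hYmeas 0) fun k =>
      (hYdist j k).trans (hYdist 0 k).symm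
  have hlaw (m : Fin M) (j : ℕ) :=
    hasLaw_of_iIndepFun_multigraphFamily hIndep hYmeas hθmeas hUmeas m j
  simp only [hYlaw, hθdist, hUdist] at hlaw
  have hν (k : Fin K) : Measure.map (Y 0) ℙ {k} ≠ 0 := by
    rw [Measure.map_apply (hYmeas 0) (measurableSet_singleton k)]
    exact (hYdist 0 k).trans_ne (ENNReal.ofReal_pos.2 (hπ k).1).ne'
  have hτ : ∀ᵐ t ∂Measure.map (θ 0) ℙ, t ∈ Set.Icc δ Δ :=
    (ae_map_iff (hθmeas 0).aemeasurable measurableSet_Icc).2 (.of_forall (hθrange 0))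
  have hprob (m : Fin M) (k : Fin K) :
      ∀ᵐ t ∂Measure.map (θ 0) ℙ, θ₀ * t * B m y k ∈ Set.Icc (0 : ℝ) 1 := hτ.mono fun t ht =>
    unitInterval.mul_mem (unitInterval.mul_mem ⟨hθ₀.1.le, hθ₀.2⟩
      ⟨hδ.le.trans ht.1, ht.2.trans hΔ⟩) (hB m y k)
  have := Measure.isProbabilityMeasure_map (hYmeas 0).aemeasurable (μ := (ℙ : Measure Ω))
  have := Measure.isProbabilityMeasure_map (hθmeas 0).aemeasurable (μ := (ℙ : Measure Ω))
  exact fusion_encoder_embedding_tendsto_general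
    (pairwise_indepFun_of_iIndepFun_multigraphFamily hIndep hYmeas hθmeas hUmeas)
    hlaw hν (integral_id_pos_of_ae_mem_Icc hδ hτ) hθ₀.1 hBrow hprob hA hZ
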